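/- Let X be a σ-sub-Gaussian random variable with mean μ and CDF F, let α ∈ (0,1), and let v_α be the VaR of X at level α. Then for every λ > 0, E[exp(λ·(X − v_α)·𝟙{X ≥ v_α})] ≤ F(v_α) + exp(−λ·v_α + λ·μ + λ²σ²/2) ≤ α + exp(−λ·v_α + λ·μ + λ²σ²/2). -/

import Mathlib

open MeasureTheory ProbabilityTheory Real Set

/-! Pointwise, `exp (l (x - v) 𝟙{x ≥ v}) ≤ 𝟙{x ≤ v} + exp (-l v) exp (l x)`, since one of the two
terms on the right already equals the left-hand side. Integrating bounds the moment generating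
function of the truncated excess by `F v + exp (-l v) E[exp (l X)]`. As for `F v ≤ α`, every
`ξ < v` has `F ξ < α`, and left continuity of `F` at `v` passes this to the limit `ξ → v`. -/

open Filter Topology

lemma apply_csInf_setOf_le_le {β γ : Type*} [ConditionallyCompleteLinearOrder β]
    [TopologicalSpace β] [OrderTopology β] [DenselyOrdered β] [NoMinOrder β]
    [LinearOrder γ] [TopologicalSpace γ] [OrderClosedTopology γ] {f : β → γ} {a : γ}
    (hbdd : BddBelow {x | a ≤ f x})
    (hf : ContinuousWithinAt f (Iio (sInf {x | a ≤ f x})) (sInf {x | a ≤ f x})) :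
    f (sInf {x | a ≤ f x}) ≤ a := by
  refine le_of_tendsto hf (eventually_mem_nhdsWithin.mono fun x hx => ?_)
  exact le_of_not_ge fun hax => (mem_Iio.mp hx).not_ge (csInf_le hbdd hax)

lemma bddBelow_setOf_le_of_tendsto_atBot {β γ : Type*} [LinearOrder β] [Nonempty β]
    [LinearOrder γ] [TopologicalSpace γ] [OrderTopology γ] {f : β → γ} {a b : γ}
    (hf : Tendsto f atBot (𝓝 b)) (hba : b < a) : BddBelow {x | a ≤ f x} := by
  obtain ⟨t, ht⟩ := eventually_atBot.mp (hf.eventually_lt_const hba)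
  exact ⟨t, fun x hx => le_of_not_ge fun hxt => (ht x hxt).not_ge hx⟩

lemma exp_mul_truncated_excess_le (l v x : ℝ) :
    exp (l * (if v ≤ x then x - v else 0)) ≤
      (Iic v).indicator 1 x + exp (-(l * v)) * exp (l * x) := by
  split_ifs with hvx
  · have hexp : exp (l * (x - v)) = exp (-(l * v)) * exp (l * x) := by
      rw [← exp_add]
      ring_nf
    rw [hexp]
    exact le_add_of_nonneg_left (indicator_nonneg (fun _ _ => zero_le_one) x)
  · rw [mul_zero, exp_zero, indicator_of_mem (mem_Iic.mpr (not_le.mp hvx).le), Pi.one_apply]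
    exact le_add_of_nonneg_right (by positivity)

section

variable {Ω : Type*} [MeasurableSpace Ω] {P : Measure Ω} {X : Ω → ℝ}

lemma cdf_map_eq_real [IsProbabilityMeasure P] (hX : AEMeasurable X P) (t : ℝ) :
    cdf (P.map X) t = P.real {ω | X ω ≤ t} := by
  have := Measure.isProbabilityMeasure_map hX
  rw [cdf_eq_real, map_measureReal_apply_of_aemeasurable hX measurableSet_Iic]
  rfl

lemma integral_exp_mul_truncated_excess_le [IsFiniteMeasure P] (hX : AEMeasurable X P) {l : ℝ}
    (hint : Integrable (fun ω => exp (l * X ω)) P) (v : ℝ) :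
    ∫ ω, exp (l * (if v ≤ X ω then X ω - v else 0)) ∂P ≤
      P.real {ω | X ω ≤ v} + exp (-(l * v)) * mgf X P l := by
  have hmeas : NullMeasurableSet {ω | X ω ≤ v} P := hX.nullMeasurableSet_preimage measurableSet_Iic
  have hind : Integrable ({ω | X ω ≤ v}.indicator (1 : Ω → ℝ)) P :=
    (integrable_const (1 : ℝ)).indicator₀ hmeas
  have htail : Integrable (fun ω => exp (-(l * v)) * exp (l * X ω)) P := hint.const_mul _
  calc ∫ ω, exp (l * (if v ≤ X ω then X ω - v else 0)) ∂P
      ≤ ∫ ω, ({ω | X ω ≤ v}.indicator 1 ω + exp (-(l * v)) * exp (l * X ω)) ∂P :=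
        integral_mono_of_nonneg (ae_of_all _ fun _ => (exp_pos _).le) (hind.add htail)
          (ae_of_all _ fun ω => exp_mul_truncated_excess_le l v (X ω))
    _ = P.real {ω | X ω ≤ v} + exp (-(l * v)) * mgf X P l := by
        rw [integral_add hind htail, integral_indicator₀ hmeas, integral_const_mul, mgf]
        simp only [Pi.one_apply, setIntegral_const, smul_eq_mul, mul_one]

/-- The Value-at-Risk of `X` at level `α` under `P`, i.e. the lower `α`-quantile of its law.
It takes the junk value `0` when the set is empty or unbounded below, which cannot happen for
`0 < α < 1`. -/
noncomputable def valueAtRisk (X : Ω → ℝ) (P : Measure Ω) (α : ℝ) : ℝ :=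
  sInf {ξ | α ≤ cdf (P.map X) ξ}

lemma cdf_valueAtRisk_le {α : ℝ} (hα : 0 < α)
    (hcont : ContinuousWithinAt (cdf (P.map X)) (Iio (valueAtRisk X P α)) (valueAtRisk X P α)) :
    cdf (P.map X) (valueAtRisk X P α) ≤ α :=
  apply_csInf_setOf_le_le
    (bddBelow_setOf_le_of_tendsto_atBot (tendsto_cdf_atBot (P.map X)) hα) hcont

theorem mgf_truncated_excess_subGaussian_general [IsProbabilityMeasure P]
    (hX : AEMeasurable X P) {l B : ℝ} (hint : Integrable (fun ω => exp (l * X ω)) P)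
    (hmgf : mgf X P l ≤ exp B) {α : ℝ} (hα : α ∈ Ioo (0 : ℝ) 1) {v : ℝ}
    (hv : v = valueAtRisk X P α) (hcont : ContinuousWithinAt (cdf (P.map X)) (Iio v) v) :
    ∫ ω, exp (l * (if v ≤ X ω then X ω - v else 0)) ∂P ≤
        cdf (P.map X) v + exp (-(l * v) + B) ∧
      cdf (P.map X) v + exp (-(l * v) + B) ≤ α + exp (-(l * v) + B) := by
  subst hv
  refine ⟨?_, add_le_add_left (cdf_valueAtRisk_le hα.1 hcont) _⟩
  rw [cdf_map_eq_real hX, exp_add]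
  exact (integral_exp_mul_truncated_excess_le hX hint _).trans (by gcongr)

end

/-- **MGF bound for the truncated excess of a sub-Gaussian random variable.**
For `σ`-sub-Gaussian `X` with mean `μ`, CDF `F` and VaR `v_α` at level `α`,
for every `λ > 0`:
`E[exp(λ (X − v_α) 𝟙{X ≥ v_α})] ≤ F(v_α) + exp(−λ v_α + λ μ + λ²σ²/2)
  ≤ α + exp(−λ v_α + λ μ + λ²σ²/2)`. -/
theorem mgf_truncated_excess_subGaussian
    {Ω : Type*} [MeasurableSpace Ω] (P : Measure Ω) [IsProbabilityMeasure P]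
    (X : Ω → ℝ) (hXmeas : Measurable X) (hXint : Integrable X P)
    (μX : ℝ) (hmean : μX = ∫ ω, X ω ∂P)
    (σ : ℝ) (hσ : 0 < σ)
    (hmgf : ∀ l : ℝ, Integrable (fun ω => exp (l * X ω)) P)
    (hsubg : ∀ l : ℝ, ∫ ω, exp (l * X ω) ∂P ≤ exp (l * μX + l^2 * σ^2 / 2))
    (F : ℝ → ℝ) (hF : ∀ t, F t = (P {ω | X ω ≤ t}).toReal)
    (hFcont : Continuous F)
    (α : ℝ) (hα : α ∈ Ioo (0:ℝ) 1)
    (v : ℝ) (hv : v = sInf {ξ : ℝ | α ≤ F ξ})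
    (l : ℝ) (hl : 0 < l) :
    (∫ ω, exp (l * (if v ≤ X ω then X ω - v else 0)) ∂P)
        ≤ F v + exp (-(l * v) + l * μX + l^2 * σ^2 / 2) ∧
    F v + exp (-(l * v) + l * μX + l^2 * σ^2 / 2)
        ≤ α + exp (-(l * v) + l * μX + l^2 * σ^2 / 2) := by
  obtain rfl : F = cdf (P.map X) := funext fun t =>
    (hF t).trans (cdf_map_eq_real hXmeas.aemeasurable t).symm
  simpa only [add_assoc] using mgf_truncated_excess_subGaussian_general hXmeas.aemeasurable
    (hmgf l) (hsubg l) hα hv hFcont.continuousWithinAt
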